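/- arXiv:1510.03767 — 5 statements merged into one kernel-verified Lean document; each statement's English description precedes it below -/
import Mathlib

section
/- Let p be a prime number, let r and s be integers with 0 ≤ r ≤ s, and let ℓ and j be positive integers each relatively prime to p such that p^r·j ≤ p^s·ℓ. Then the p-adic valuation of the binomial coefficient C(p^s·ℓ, p^r·j) is at least s − r. -/
theorem dvd_choose_mul_self : ∀ n k : ℕ, n ∣ n.choose k * k
  | _, 0 => dvd_zero _
  | 0, k + 1 => by rw [Nat.choose_zero_succ, zero_mul]
  | n + 1, k + 1 => ⟨n.choose k, (Nat.add_one_mul_choose_eq n k).symm⟩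

theorem dvd_choose_mul_of_coprime {a d j n : ℕ} (ha : a ≠ 0) (hn : a * d ∣ n)
    (hjd : j.Coprime d) : d ∣ n.choose (a * j) := by
  have hmul : a * d ∣ a * (n.choose (a * j) * j) := by
    rw [mul_left_comm]
    exact hn.trans (dvd_choose_mul_self n (a * j))
  exact hjd.symm.dvd_of_dvd_mul_right (Nat.dvd_of_mul_dvd_mul_left ha.pos hmul)

/-- For composite `p` and `n ≠ 0`, `padicValNat p n` is still the largest `e` with `p ^ e ∣ n`. -/
theorem padicValNat_choose_prime_pow_mul_ge_general {p r s ℓ j : ℕ} (hp : 1 < p) (hrs : r ≤ s)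
    (hjp : j.Coprime p) (hle : p ^ r * j ≤ p ^ s * ℓ) :
    s - r ≤ padicValNat p ((p ^ s * ℓ).choose (p ^ r * j)) := by
  rw [← padicValNat_dvd_iff_le_of_ne_one hp.ne' (Nat.choose_pos hle).ne']
  have hdvd : p ^ r * p ^ (s - r) ∣ p ^ s * ℓ := by
    rw [pow_mul_pow_sub p hrs]
    exact dvd_mul_right _ _
  exact dvd_choose_mul_of_coprime (pow_ne_zero r (Nat.ne_zero_of_lt hp)) hdvd (hjp.pow_right _)

/-- Corollary on p-adic valuations of binomial coefficients (lower bound):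
if `p` is prime, `0 ≤ r ≤ s`, and `ℓ`, `j` are positive integers relatively
prime to `p` with `p^r * j ≤ p^s * ℓ`, then
`v_p (C(p^s * ℓ, p^r * j)) ≥ s - r`. -/
theorem padicValNat_choose_prime_pow_mul_ge (p : ℕ) (hp : p.Prime) (r s : ℕ) (hrs : r ≤ s)
    (ℓ j : ℕ) (hℓ : 0 < ℓ) (hj : 0 < j) (hℓp : Nat.Coprime ℓ p) (hjp : Nat.Coprime j p)
    (hle : p ^ r * j ≤ p ^ s * ℓ) :
    s - r ≤ padicValNat p ((p ^ s * ℓ).choose (p ^ r * j)) :=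
  padicValNat_choose_prime_pow_mul_ge_general hp.one_lt hrs hjp hle
end

section
/- Let p be a prime number, let r and s be integers with 0 ≤ r ≤ s, and let ℓ and j be positive integers each relatively prime to p such that p^r·j < p^s. Then the p-adic valuation of the binomial coefficient C(p^s·ℓ, p^r·j) is exactly s − r. -/
/-!
Everything rests on the identity `C(n, k) * k = n * C(n - 1, k - 1)`. If `p ^ s ∣ n`, it shows
that `p ∣ C(n, m)` for `0 < m < p ^ s`, so Pascal's rule gives
`C(n - 1, m) ≡ -C(n - 1, m - 1)` modulo `p`, and by induction from `C(n - 1, 0) = 1` the prime `p`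
does not divide `C(n - 1, m)` for `m < p ^ s`. Comparing valuations in the identity then gives
`v_p(C(n, k)) = v_p(n) - v_p(k)` for `0 < k ≤ p ^ s`.
-/

section

variable {p s n m : ℕ}

theorem dvd_choose_mul (n m : ℕ) : n ∣ n.choose m * m := by
  cases m with
  | zero => exact dvd_zero n
  | succ m =>
    cases n with
    | zero => rw [Nat.choose_zero_succ, zero_mul]
    | succ n => exact Dvd.intro _ (Nat.add_one_mul_choose_eq n m)

theorem prime_dvd_choose_of_pow_dvd (hp : p.Prime) (hn : p ^ s ∣ n) (hm : m ≠ 0)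
    (hms : m < p ^ s) : p ∣ n.choose m := by
  by_contra hndvd
  have hcop : (p ^ s).Coprime (n.choose m) := (hp.coprime_iff_not_dvd.mpr hndvd).pow_left s
  have hdvd : p ^ s ∣ m := hcop.dvd_of_dvd_mul_left (hn.trans (dvd_choose_mul n m))
  exact Nat.not_dvd_of_pos_of_lt (Nat.pos_of_ne_zero hm) hms hdvd

theorem prime_not_dvd_choose_of_pow_dvd_add_one (hp : p.Prime) (hn : p ^ s ∣ n + 1)
    (hms : m < p ^ s) : ¬ p ∣ n.choose m := by
  induction m with
  | zero => simpa only [Nat.choose_zero_right] using hp.not_dvd_one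
  | succ m ih =>
    have hsum : p ∣ n.choose m + n.choose (m + 1) :=
      Nat.choose_succ_succ' n m ▸ prime_dvd_choose_of_pow_dvd hp hn m.succ_ne_zero hms
    exact fun hdvd => ih (Nat.lt_of_succ_lt hms) ((Nat.dvd_add_left hdvd).mp hsum)

theorem padicValNat_choose_prime_pow_mul_eq_general {k : ℕ} (hp : p.Prime) (hn : n ≠ 0)
    (hdvd : p ^ s ∣ n) (hk : k ≠ 0) (hks : k ≤ p ^ s) :
    padicValNat p (n.choose k) + padicValNat p k = padicValNat p n := by
  have : Fact p.Prime := ⟨hp⟩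
  have hkn : k ≤ n := hks.trans (Nat.le_of_dvd (Nat.pos_of_ne_zero hn) hdvd)
  obtain ⟨n, rfl⟩ := Nat.exists_eq_add_one_of_ne_zero hn
  obtain ⟨m, rfl⟩ := Nat.exists_eq_add_one_of_ne_zero hk
  have hndvd : ¬ p ∣ n.choose m := prime_not_dvd_choose_of_pow_dvd_add_one hp hdvd hks
  have hchoose : n.choose m ≠ 0 := fun h => hndvd (h ▸ dvd_zero p)
  calc padicValNat p ((n + 1).choose (m + 1)) + padicValNat p (m + 1)
      = padicValNat p ((n + 1).choose (m + 1) * (m + 1)) :=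
        (padicValNat.mul (Nat.choose_ne_zero hkn) hk).symm
    _ = padicValNat p ((n + 1) * n.choose m) := by rw [Nat.add_one_mul_choose_eq]
    _ = padicValNat p (n + 1) := by
        rw [padicValNat.mul hn hchoose, padicValNat.eq_zero_of_not_dvd hndvd, add_zero]

theorem padicValNat_prime_pow_mul_of_coprime {a : ℕ} (hp : p.Prime) (ha : a.Coprime p) (r : ℕ) :
    padicValNat p (p ^ r * a) = r := by
  have : Fact p.Prime := ⟨hp⟩
  have hndvd : ¬ p ∣ a := hp.coprime_iff_not_dvd.mp ha.symm
  have ha0 : a ≠ 0 := fun h => hndvd (h ▸ dvd_zero p)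
  rw [padicValNat.mul (pow_ne_zero r hp.ne_zero) ha0, padicValNat.prime_pow,
    padicValNat.eq_zero_of_not_dvd hndvd, add_zero]

end

/-- Corollary on p-adic valuations of binomial coefficients (equality case):
if `p` is prime, `0 ≤ r ≤ s`, and `ℓ`, `j` are positive integers relatively
prime to `p` with `p^r * j < p^s`, then
`v_p (C(p^s * ℓ, p^r * j)) = s - r`. -/
theorem padicValNat_choose_prime_pow_mul_eq (p : ℕ) (hp : p.Prime) (r s : ℕ) (hrs : r ≤ s)
    (ℓ j : ℕ) (hℓ : 0 < ℓ) (hj : 0 < j) (hℓp : Nat.Coprime ℓ p) (hjp : Nat.Coprime j p)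
    (hlt : p ^ r * j < p ^ s) :
    padicValNat p ((p ^ s * ℓ).choose (p ^ r * j)) = s - r := by
  have hn : p ^ s * ℓ ≠ 0 := mul_ne_zero (pow_ne_zero s hp.ne_zero) hℓ.ne'
  have hk : p ^ r * j ≠ 0 := mul_ne_zero (pow_ne_zero r hp.ne_zero) hj.ne'
  have hadd := padicValNat_choose_prime_pow_mul_eq_general hp hn (dvd_mul_right _ ℓ) hk hlt.le
  rw [padicValNat_prime_pow_mul_of_coprime hp hℓp, padicValNat_prime_pow_mul_of_coprime hp hjp]
    at hadd
  exact Nat.eq_sub_of_add_eq hadd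
end

section
/- Let m ≥ 2 be an integer, let p be a prime number with v_p(m) = s > 0, and let ℓ be a positive integer relatively prime to p. Then there exists an integer r ≥ 1 such that: (1) r ≡ 0 (mod ℓ); (2) r ≡ 1 (mod p^s); and (3) v_p(C(r + m − 1, r)) = s. -/
/-!
Choose `N ≥ s` with `m < p ^ N` and, by the Chinese remainder theorem, `r` divisible by `ℓ` with
`r ≡ 1 [MOD p ^ N]`. Writing `m = k + 1`, the residue of `r + k` modulo `p ^ N` is `m`. The
factors `r + k - i`, `i < k`, of the numerator of `C(r + k, k)` are therefore congruent modulo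
`p ^ N` to `m - i ∈ (0, p ^ N)` and have the same `p`-adic valuations, so that
`v_p(C(r + k, k)) = v_p(C(m, k)) = v_p(m)`.
-/

theorem padicValNat_eq_of_modEq_pow {p N a b : ℕ} (h : a ≡ b [MOD p ^ N]) (hb : ¬p ^ N ∣ b) :
    padicValNat p a = padicValNat p b := by
  have ha : ¬p ^ N ∣ a := mt (h.dvd_iff dvd_rfl).1 hb
  have pow_dvd_iff (e : ℕ) : p ^ e ∣ a ↔ p ^ e ∣ b := by
    rcases le_total e N with heN | hNe
    · exact h.dvd_iff (pow_dvd_pow p heN)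
    · exact iff_of_false (mt (pow_dvd_pow p hNe).trans ha) (mt (pow_dvd_pow p hNe).trans hb)
  rw [← Nat.toNat_emultiplicity, ← Nat.toNat_emultiplicity,
    emultiplicity_eq_emultiplicity_iff.2 pow_dvd_iff]

section Prime

variable {p : ℕ} [Fact p.Prime]

theorem padicValNat_choose_succ_add {n k : ℕ} (hk : k < n) :
    padicValNat p (n.choose (k + 1)) + padicValNat p (k + 1) =
      padicValNat p (n.choose k) + padicValNat p (n - k) := by
  rw [← padicValNat.mul (Nat.choose_ne_zero hk) k.succ_ne_zero, Nat.choose_succ_right_eq,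
    padicValNat.mul (Nat.choose_ne_zero hk.le) (Nat.sub_ne_zero_of_lt hk)]

theorem padicValNat_choose_mod_pow {n k N : ℕ} (hk : k ≤ n % p ^ N) :
    padicValNat p ((n % p ^ N).choose k) = padicValNat p (n.choose k) := by
  induction k with
  | zero => simp
  | succ k ih =>
    have hkmod : k < n % p ^ N := hk
    have hkn : k < n := hkmod.trans_le (Nat.mod_le n _)
    have hmod : n % p ^ N < p ^ N := Nat.mod_lt n (pow_pos (Fact.out : p.Prime).pos N)
    have sub_modEq : n - k ≡ n % p ^ N - k [MOD p ^ N] :=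
      (Nat.mod_modEq n _).symm.sub_right hkn.le hkmod.le
    have not_dvd : ¬p ^ N ∣ n % p ^ N - k :=
      Nat.not_dvd_of_pos_of_lt (Nat.sub_pos_of_lt hkmod) ((Nat.sub_le _ _).trans_lt hmod)
    apply Nat.add_right_cancel (m := padicValNat p (k + 1))
    rw [padicValNat_choose_succ_add hkmod, padicValNat_choose_succ_add hkn, ih hkmod.le,
      padicValNat_eq_of_modEq_pow sub_modEq not_dvd]

theorem padicValNat_choose_add_of_modEq_one {r k N : ℕ} (hr : r ≡ 1 [MOD p ^ N])
    (hk : k + 1 < p ^ N) : padicValNat p ((r + k).choose r) = padicValNat p (k + 1) := by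
  have hmod : (r + k) % p ^ N = k + 1 :=
    Nat.mod_eq_of_modEq (add_comm 1 k ▸ hr.add_right k) hk
  calc
    padicValNat p ((r + k).choose r) = padicValNat p ((r + k).choose k) := by
      rw [Nat.choose_symm_add]
    _ = padicValNat p (((r + k) % p ^ N).choose k) :=
      (padicValNat_choose_mod_pow (hmod ▸ k.le_succ)).symm
    _ = padicValNat p (k + 1) := by rw [hmod, Nat.choose_succ_self_right]

end Prime

theorem exists_r_symmetric_power_general {m p ℓ : ℕ} (hm : m ≠ 0) (hp : p.Prime)
    (hℓp : Nat.Coprime ℓ p) (N : ℕ) :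
    ∃ r : ℕ, 1 ≤ r ∧ ℓ ∣ r ∧ r ≡ 1 [MOD p ^ N] ∧
      padicValNat p ((r + m - 1).choose r) = padicValNat p m := by
  have : Fact p.Prime := ⟨hp⟩
  obtain ⟨k, rfl⟩ := Nat.exists_eq_succ_of_ne_zero hm
  set M := max N (k + 1)
  have hkM : k + 1 < p ^ M :=
    (le_max_right N (k + 1)).trans_lt (Nat.lt_pow_self hp.one_lt)
  obtain ⟨r, hrℓ, hrp⟩ := Nat.chineseRemainder (hℓp.pow_right M) 0 1
  have hr : 1 ≤ r := hrp.symm.le_of_lt_add (by omega)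
  exact ⟨r, hr, Nat.modEq_zero_iff_dvd.1 hrℓ, hrp.of_dvd (pow_dvd_pow p (le_max_left N _)),
    padicValNat_choose_add_of_modEq_one hrp hkM⟩

/-- Technical lemma: for `m ≥ 2`, a prime `p` with `v_p(m) = s > 0`, and a positive
integer `ℓ` relatively prime to `p`, there is an integer `r ≥ 1` with `r ≡ 0 (mod ℓ)`,
`r ≡ 1 (mod p^s)` and `v_p (C(r + m - 1, r)) = s`. -/
theorem exists_r_symmetric_power (m : ℕ) (hm : 2 ≤ m) (p : ℕ) (hp : p.Prime)
    (s : ℕ) (hs : 0 < s) (hvm : padicValNat p m = s)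
    (ℓ : ℕ) (hℓ : 0 < ℓ) (hℓp : Nat.Coprime ℓ p) :
    ∃ r : ℕ, 1 ≤ r ∧ ℓ ∣ r ∧ r ≡ 1 [MOD p ^ s] ∧
      padicValNat p ((r + m - 1).choose r) = s := by
  simpa only [hvm] using exists_r_symmetric_power_general (Nat.ne_zero_of_lt hm) hp hℓp s
end

section
/- Let p be a prime number, let ℓ be a positive integer relatively prime to p, and let σ ≥ 0 be an integer. Let m and m' be positive integers with v_p(m) = v_p(m'), m' < p^σ, and m ≤ p^σ·ℓ. Then v_p(C(p^σ·ℓ, m')) ≤ v_p(C(p^σ·ℓ, m)). -/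
/-!
For `0 < k ≤ n` the identity `k * C(n, k) = n * C(n - 1, k - 1)` gives
`v_p(n) ≤ v_p(C(n, k)) + v_p(k)`, with equality as soon as `p ∤ C(n - 1, k - 1)`. If `p ^ σ ∣ n`,
the last `σ` base-`p` digits of `n - 1` are all `p - 1`, so by Lucas's theorem equality holds
whenever `k ≤ p ^ σ`. Apply the equality to `m'` and the inequality to `m`.
-/

lemma not_dvd_choose_of_pow_dvd_add_one {p σ n k : ℕ} (hp : p.Prime) (hn : p ^ σ ∣ n + 1)
    (hk : k < p ^ σ) : ¬ p ∣ n.choose k := by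
  have : Fact p.Prime := ⟨hp⟩
  induction σ generalizing n k with
  | zero =>
    obtain rfl : k = 0 := by simpa using hk
    simpa using hp.ne_one
  | succ σ ih =>
    rw [pow_succ'] at hn hk
    have hpn : p ∣ n + 1 := dvd_of_mul_right_dvd hn
    have hdigit : k % p ≤ n % p := by
      rw [(Nat.mod_eq_sub_iff Nat.one_pos hp.one_le).2 hpn]
      exact Nat.le_sub_one_of_lt (Nat.mod_lt k hp.pos)
    have hdiv : p ^ σ ∣ n / p + 1 := by
      rw [← Nat.succ_div_of_dvd hpn]
      exact Nat.dvd_div_of_mul_dvd hn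
    rw [Choose.choose_modEq_choose_mod_mul_choose_div_nat.dvd_iff dvd_rfl, hp.dvd_mul, not_or]
    exact ⟨hp.coprime_iff_not_dvd.1 (hp.coprime_choose_of_lt (Nat.mod_lt n hp.pos) hdigit),
      ih hdiv (Nat.div_lt_of_lt_mul hk)⟩

lemma factorization_choose_add_factorization_of_pow_dvd {p σ n k : ℕ} (hp : p.Prime)
    (hn : p ^ σ ∣ n) (hn0 : n ≠ 0) (hk0 : k ≠ 0) (hk : k ≤ p ^ σ) :
    (n.choose k).factorization p + k.factorization p = n.factorization p := by
  have hkn : k ≤ n := hk.trans (Nat.le_of_dvd (Nat.pos_of_ne_zero hn0) hn)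
  obtain ⟨n, rfl⟩ := Nat.exists_eq_add_one_of_ne_zero hn0
  obtain ⟨k, rfl⟩ := Nat.exists_eq_add_one_of_ne_zero hk0
  have hunit : (n.choose k).factorization p = 0 :=
    Nat.factorization_eq_zero_of_not_dvd (not_dvd_choose_of_pow_dvd_add_one hp hn hk)
  calc ((n + 1).choose (k + 1)).factorization p + (k + 1).factorization p
      = ((n + 1) * n.choose k).factorization p := by
        rw [Nat.add_one_mul_choose_eq, Nat.factorization_mul (Nat.choose_ne_zero hkn) hk0,
          Finsupp.add_apply]
    _ = (n + 1).factorization p := by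
        rw [Nat.factorization_mul hn0 (Nat.choose_ne_zero (Nat.le_of_succ_le_succ hkn)),
          Finsupp.add_apply, hunit, add_zero]

theorem padicValNat_choose_mono_of_padicValNat_eq_general {p σ n m m' : ℕ} (hp : p.Prime)
    (hn : p ^ σ ∣ n) (hm : m ≠ 0) (hm' : m' ≠ 0) (hval : padicValNat p m ≤ padicValNat p m')
    (hm'le : m' ≤ p ^ σ) (hmle : m ≤ n) :
    padicValNat p (n.choose m') ≤ padicValNat p (n.choose m) := by
  simp only [← Nat.factorization_def _ hp] at hval ⊢
  have hn0 : n ≠ 0 := Nat.ne_zero_of_lt ((Nat.pos_of_ne_zero hm).trans_le hmle)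
  have heq := factorization_choose_add_factorization_of_pow_dvd hp hn hn0 hm' hm'le
  have hle := Nat.factorization_le_factorization_choose_add (p := p) hmle hm
  omega

/-- If `p` is prime, `ℓ` is a positive integer relatively prime to `p`, `σ ≥ 0`, and
`m`, `m'` are positive integers with `v_p(m) = v_p(m')`, `m' < p^σ`, and `m ≤ p^σ * ℓ`,
then `v_p (C(p^σ * ℓ, m')) ≤ v_p (C(p^σ * ℓ, m))`. -/
theorem padicValNat_choose_mono_of_padicValNat_eq (p : ℕ) (hp : p.Prime)
    (ℓ : ℕ) (hℓ : 0 < ℓ) (hℓp : Nat.Coprime ℓ p) (σ m m' : ℕ)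
    (hm : 0 < m) (hm' : 0 < m') (hval : padicValNat p m = padicValNat p m')
    (hm'lt : m' < p ^ σ) (hmle : m ≤ p ^ σ * ℓ) :
    padicValNat p ((p ^ σ * ℓ).choose m') ≤ padicValNat p ((p ^ σ * ℓ).choose m) :=
  padicValNat_choose_mono_of_padicValNat_eq_general hp (dvd_mul_right _ _) hm.ne' hm'.ne' hval.le
    hm'lt.le hmle
end

section
/- Let k be a field and let D be a central division algebra over k of degree d > 1. Let n be the least positive integer such that the n-fold tensor power D^{⊗n} (over k) is isomorphic as a k-algebra to a matrix algebra M_t(k) for some positive integer t (n is the period of D). Then a prime number q divides n if and only if q divides d. -/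
open scoped TensorProduct

/-!
Let `A` be central simple of degree `d` and let `m > d`. Over the algebraic closure the permutations
of the factors of `A^{⊗ m}` act as permutation matrices `P_σ`. Conjugation by `P_σ` is defined over
`k`, so some scalar multiple of `P_σ` lies in `A^{⊗ m}`. The scalars cancel in the left ideal
annihilating all the commutators `P_σ P_τ - P_τ P_σ`, which is therefore defined over `k`. Since
every `m`-tuple of indices has a repeated entry, this ideal consists of the matrices that are
symmetric on the right, so `A^{⊗ m}` has a representation of dimension
`d ^ m * (d + m - 1).choose m`.

If `A^{⊗ n}` is split and `m = a + c * n`, splitting off `A^{⊗ n}` repeatedly gives a representation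
of `A^{⊗ a}` of dimension `d ^ a * (d + m - 1).choose m`. By Lucas' theorem a prime `q` does not
divide this binomial coefficient when some power `q ^ s ≥ d` divides `m`. For `m = d ^ d` the
coefficient is coprime to `d`, so `A^{⊗ a}` is split; taking `a = m % n`, the period divides
`d ^ d`. Conversely, if `q` divides `d` but not `n`, take for `m` a large power of `q` congruent to
`1` modulo `n`: the division algebra `D` of dimension `d ^ 2` acts on a space of dimension
`d * (d + m - 1).choose m`, hence `q ∣ d ∣ (d + m - 1).choose m`, a contradiction.
-/

section Representations

/-- `R` is split over `k`: it is isomorphic to a matrix algebra of positive size over `k`. -/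
def IsSplit (k R : Type*) [CommSemiring k] [Semiring R] [Algebra k R] : Prop :=
  ∃ t : ℕ, 0 < t ∧ Nonempty (R ≃ₐ[k] Matrix (Fin t) (Fin t) k)

/-- `R` has an `n`-dimensional representation over `k`, in coordinates. -/
def HasRep (k R : Type*) [CommSemiring k] [Semiring R] [Algebra k R] (n : ℕ) : Prop :=
  Nonempty (R →ₐ[k] Matrix (Fin n) (Fin n) k)

variable {k R S P : Type*} [Field k] [Ring R] [Algebra k R] [Ring S] [Algebra k S]
  [AddCommGroup P] [Module k P]

theorem HasRep.comp {n : ℕ} (h : HasRep k R n) (f : S →ₐ[k] R) : HasRep k S n :=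
  h.map fun g => g.comp f

theorem HasRep.of_module_end [FiniteDimensional k P] (f : R →ₐ[k] Module.End k P) :
    HasRep k R (Module.finrank k P) :=
  ⟨(algEquivMatrix (Module.finBasis k P)).toAlgHom.comp f⟩

theorem HasRep.of_ideal (I : Ideal R) [FiniteDimensional k R] :
    HasRep k R (Module.finrank k I) :=
  have : FiniteDimensional k I :=
    inferInstanceAs (FiniteDimensional k (I.restrictScalars k))
  .of_module_end (Algebra.lsmul k k I)

theorem HasRep.finrank_dvd {E : Type*} [DivisionRing E] [Algebra k E] {n : ℕ}
    (h : HasRep k E n) : Module.finrank k E ∣ n := by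
  obtain ⟨f⟩ := h
  let g : E →ₐ[k] Module.End k (Fin n → k) := Matrix.toLinAlgEquiv'.toAlgHom.comp f
  let : Module E (Fin n → k) := Module.compHom _ g.toRingHom
  have : IsScalarTower k E (Fin n → k) := ⟨fun c x v => by
    change g (c • x) v = c • g x v
    rw [map_smul, LinearMap.smul_apply]⟩
  simpa using Dvd.intro _ (Module.finrank_mul_finrank k E (Fin n → k))

/-- The representation of `S` on the range of an endomorphism commuting with the action of `S`. -/
noncomputable def restrictRange (h : S →ₐ[k] Module.End k P) (p : Module.End k P)
    (hc : ∀ s, Commute p (h s)) : S →ₐ[k] Module.End k (LinearMap.range p) :=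
  AlgHom.ofLinearMap
    { toFun s := (h s).restrict (by
        rintro _ ⟨y, rfl⟩
        exact ⟨h s y, congr($(hc s) y)⟩)
      map_add' s t := by ext; simp
      map_smul' c s := by ext; simp }
    (by ext; simp) (fun s t => by ext; simp)

/-- A module over a matrix algebra is a direct sum of copies, indexed by the rows, of the image of a
diagonal matrix unit; the `i`-th component is obtained by acting with the matrix unit `(i₀, i)`. -/
noncomputable def matrixUnitsDecomposition {ι : Type*} [Fintype ι] [DecidableEq ι]
    (f : Matrix ι ι k →ₐ[k] Module.End k P) (i₀ : ι) :
    P ≃ₗ[k] (ι → LinearMap.range (f (Matrix.single i₀ i₀ 1))) :=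
  have hE (i j l : ι) (x : P) : f (.single i j 1) (f (.single j l 1) x) = f (.single i l 1) x := by
    simp [← Module.End.mul_apply, ← map_mul]
  have hE₀ (i j j' l : ι) (hj : j ≠ j') (x : P) :
      f (.single i j 1) (f (.single j' l 1) x) = 0 := by
    simp [← Module.End.mul_apply, ← map_mul, Matrix.single_mul_single_of_ne, hj]
  { toFun x i := ⟨f (.single i₀ i 1) x, f (.single i₀ i 1) x, hE i₀ i₀ i x⟩
    map_add' x y := by ext; simp
    map_smul' c x := by ext; simp
    invFun y := ∑ i, f (.single i i₀ 1) (y i)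
    left_inv x := by
      simp [hE, ← LinearMap.sum_apply, ← map_sum, Matrix.sum_single_one]
    right_inv y := by
      ext i
      obtain ⟨x, hx⟩ := (y i).2
      simp only [map_sum]
      rw [Finset.sum_eq_single i (fun j _ hj => hE₀ _ _ _ _ hj.symm _) (by simp), hE, ← hx, hE] }

theorem HasRep.of_commute_matrix [FiniteDimensional k P] {u : ℕ} [NeZero u]
    (f : Matrix (Fin u) (Fin u) k →ₐ[k] Module.End k P) (h : S →ₐ[k] Module.End k P)
    (hc : ∀ X s, Commute (f X) (h s)) :
    ∃ n, u * n = Module.finrank k P ∧ HasRep k S n := by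
  refine ⟨_, ?_, .of_module_end (restrictRange h _ (hc (.single 0 0 1)))⟩
  simp [(matrixUnitsDecomposition f 0).finrank_eq, Module.finrank_pi_fintype]

theorem HasRep.mul_finrank_dvd {E : Type*} [DivisionRing E] [Algebra k E] {u n : ℕ} [NeZero u]
    (h : HasRep k (Matrix (Fin u) (Fin u) E) n) : u * Module.finrank k E ∣ n := by
  obtain ⟨f⟩ := h
  let g := Matrix.toLinAlgEquiv'.toAlgHom.comp f
  obtain ⟨m, hm, hE⟩ := HasRep.of_commute_matrix (g.comp (Algebra.ofId k E).mapMatrix)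
    (g.comp (Matrix.scalarAlgHom (Fin u) k)) (fun X s => by
      refine Commute.map (Matrix.scalar_commute_iff.2 ?_).symm g
      ext i j
      simp [Algebra.ofId_apply, Algebra.commutes])
  rw [Module.finrank_fin_fun] at hm
  exact hm ▸ mul_dvd_mul_left u hE.finrank_dvd

theorem isSplit_of_coprime_rep [FiniteDimensional k R] [IsSimpleRing R] {δ N : ℕ}
    (hR : Module.finrank k R = δ ^ 2) (h : HasRep k R (δ * N)) (hδN : δ.Coprime N) :
    IsSplit k R := by
  have : IsArtinianRing R := IsArtinianRing.of_finite k R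
  obtain ⟨u, hu, E, _, _, _, ⟨e⟩⟩ :=
    IsSimpleRing.exists_algEquiv_matrix_divisionRing_finite k R
  have hu₀ : 0 < u := Nat.pos_of_ne_zero hu.out
  have hdim : u ^ 2 * Module.finrank k E = δ ^ 2 := by
    rw [← hR, e.toLinearEquiv.finrank_eq, Module.finrank_matrix, Fintype.card_fin, sq]
  obtain ⟨c, rfl⟩ : u ∣ δ := (Nat.pow_dvd_pow_iff two_ne_zero).1 ⟨_, hdim.symm⟩
  have hE : Module.finrank k E = c ^ 2 := by
    rw [mul_pow] at hdim
    exact Nat.eq_of_mul_eq_mul_left (by positivity) hdim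
  have hc₀ : 0 < c := Nat.pos_of_mul_pos_left (hE.trans (sq c) ▸ Module.finrank_pos)
  have hdvd := (h.comp e.symm.toAlgHom).mul_finrank_dvd
  rw [hE, sq, ← mul_assoc, Nat.mul_dvd_mul_iff_left (by positivity)] at hdvd
  obtain rfl : c = 1 := Nat.eq_one_of_dvd_coprimes hδN (Dvd.intro_left u rfl) hdvd
  have hbij := Algebra.finrank_eq_one_iff_bijective_algebraMap.1 (hE.trans (one_pow 2))
  exact ⟨u, hu₀, ⟨e.trans
    (AlgEquiv.ofBijective (Algebra.ofId k E) hbij).symm.mapMatrix⟩⟩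

end Representations

section TensorPowers

variable {k A : Type*} [Field k] [Ring A] [Algebra k A] {ι ι' κ : Type*}

theorem extend_update_of_injective {M : Type*} [DecidableEq ι] [DecidableEq κ] {j : ι → κ}
    (hj : j.Injective) (x : ι → M) (y : κ → M) (i : ι) (a : M) :
    Function.extend j (Function.update x i a) y =
      Function.update (Function.extend j x y) (j i) a := by
  ext t
  by_cases ht : ∃ l, j l = t
  · obtain ⟨l, rfl⟩ := ht
    simp [hj.extend_apply, Function.update_apply, hj.eq_iff]
  · have hti : t ≠ j i := fun h => ht ⟨i, h.symm⟩
    simp [Function.extend_apply' _ _ _ ht, hti]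

variable (k A) in
/-- The homomorphism of tensor powers induced by an injection of index types, putting `1` in the
new positions. -/
noncomputable def tensorPowerEmbedding (j : ι ↪ κ) : (⨂[k] (_ : ι), A) →ₐ[k] ⨂[k] (_ : κ), A :=
  PiTensorProduct.liftAlgHom
    { toFun x := PiTensorProduct.tprod k (Function.extend j x 1)
      map_update_add' := by
        classical
        intro _ x i a b
        simp [extend_update_of_injective j.injective]
      map_update_smul' := by
        classical
        intro _ x i c a
        simp [extend_update_of_injective j.injective] }
    (by
      rw [PiTensorProduct.one_def]
      exact congrArg (PiTensorProduct.tprod k) (Function.extend_one j))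
    (fun x y => by
      simp only [MultilinearMap.coe_mk, PiTensorProduct.tprod_mul_tprod]
      rw [← Function.extend_mul, mul_one])

theorem tensorPowerEmbedding_tprod (j : ι ↪ κ) (x : ι → A) :
    tensorPowerEmbedding k A j (PiTensorProduct.tprod k x) =
      PiTensorProduct.tprod k (Function.extend j x 1) := by
  simp [tensorPowerEmbedding, PiTensorProduct.liftAlgHom]

theorem commute_tensorPowerEmbedding (j : ι ↪ κ) (j' : ι' ↪ κ)
    (hjj' : Disjoint (Set.range j) (Set.range j')) (x : ⨂[k] (_ : ι), A) (y : ⨂[k] (_ : ι'), A) :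
    Commute (tensorPowerEmbedding k A j x) (tensorPowerEmbedding k A j' y) := by
  induction x using PiTensorProduct.induction_on with
  | add x x' hx hx' => simpa using hx.add_left hx'
  | smul_tprod r x =>
    induction y using PiTensorProduct.induction_on with
    | add y y' hy hy' => simpa using hy.add_right hy'
    | smul_tprod s y =>
      simp only [map_smul, tensorPowerEmbedding_tprod]
      refine ((Commute.tprod (funext fun t => ?_)).smul_left r).smul_right s
      by_cases ht : t ∈ Set.range j
      · simp [Function.extend_apply' y _ _ (Set.disjoint_left.1 hjj' ht)]
      · simp [Function.extend_apply' x _ _ ht]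

theorem finrank_tensorPower [FiniteDimensional k A] [Fintype ι] :
    Module.finrank k (⨂[k] (_ : ι), A) = Module.finrank k A ^ Fintype.card ι := by
  classical
  simp [Module.finrank_eq_card_basis
    (Basis.piTensorProduct fun _ : ι => Module.finBasis k A)]

theorem IsSplit.nonempty_algEquiv_matrix {d : ℕ} (h : IsSplit k A)
    (hd : Module.finrank k A = d ^ 2) : Nonempty (A ≃ₐ[k] Matrix (Fin d) (Fin d) k) := by
  obtain ⟨t, -, ⟨e⟩⟩ := h
  obtain rfl : t = d := Nat.pow_left_injective two_ne_zero <| by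
    simpa [Module.finrank_matrix, hd, sq] using e.toLinearEquiv.finrank_eq.symm
  exact ⟨e⟩

variable [FiniteDimensional k A] {a b d N : ℕ} [NeZero d]

theorem HasRep.descend_tensorPower (hd : Module.finrank k A = d ^ 2)
    (hb : IsSplit k (⨂[k] (_ : Fin b), A)) (h : HasRep k (⨂[k] (_ : Fin (a + b)), A) N) :
    ∃ N', d ^ b * N' = N ∧ HasRep k (⨂[k] (_ : Fin a), A) N' := by
  obtain ⟨e⟩ := hb.nonempty_algEquiv_matrix (d := d ^ b) <| by
    rw [finrank_tensorPower, hd, Fintype.card_fin, pow_right_comm]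
  have hdisj : Disjoint (Set.range (Fin.natAddEmb a : Fin b ↪ Fin (a + b)))
      (Set.range (Fin.castAddEmb b)) := by
    rw [Set.disjoint_left]
    rintro _ ⟨i, rfl⟩ ⟨j, hij⟩
    exact absurd (congrArg Fin.val hij) (by simp; omega)
  obtain ⟨f⟩ := h
  let g := Matrix.toLinAlgEquiv'.toAlgHom.comp f
  obtain ⟨N', hN', h⟩ := HasRep.of_commute_matrix
    ((g.comp (tensorPowerEmbedding k A (Fin.natAddEmb a))).comp e.symm.toAlgHom)
    (g.comp (tensorPowerEmbedding k A (Fin.castAddEmb b)))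
    fun X s => (commute_tensorPowerEmbedding _ _ hdisj (e.symm X) s).map g
  exact ⟨N', by simpa using hN', h⟩

theorem HasRep.descend_tensorPower_mul (hd : Module.finrank k A = d ^ 2)
    (hb : IsSplit k (⨂[k] (_ : Fin b), A)) {c m : ℕ} (hm : a + c * b = m)
    (h : HasRep k (⨂[k] (_ : Fin m), A) (d ^ m * N)) :
    HasRep k (⨂[k] (_ : Fin a), A) (d ^ a * N) := by
  induction c generalizing m with
  | zero =>
    obtain rfl : a = m := by simpa using hm
    exact h
  | succ c ih =>
    obtain rfl : a + c * b + b = m := by rw [← hm, Nat.succ_mul, add_assoc]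
    obtain ⟨N', hN', h⟩ := h.descend_tensorPower hd hb
    rw [pow_add _ _ b, mul_right_comm, mul_comm, Nat.mul_left_inj (NeZero.ne _)] at hN'
    exact ih rfl (hN' ▸ h)

end TensorPowers

section Simplicity

variable {k K A : Type*} [Field k] [Field K] [Algebra k K] [Ring A] [Algebra k A]

attribute [local instance] instModuleTensorProductMop

theorem bimodule_smul_def (r : A ⊗[k] Aᵐᵒᵖ) (x : A) : r • x = AlgHom.mulLeftRight k A r x :=
  rfl

theorem isSimpleModule_bimodule [IsSimpleRing A] : IsSimpleModule (A ⊗[k] Aᵐᵒᵖ) A where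
  eq_bot_or_eq_top N := by
    let I : Ideal A := { N with
      smul_mem' x y hy := by
        simpa [bimodule_smul_def] using! N.smul_mem (x ⊗ₜ 1) hy }
    have hI : I.IsTwoSided := ⟨fun {x} y hx => by
      simpa [bimodule_smul_def] using! N.smul_mem (1 ⊗ₜ .op y) hx⟩
    simpa [SetLike.ext_iff, I] using! (isSimpleRing_iff_isTwoSided_imp.1 ‹_›).2 I hI

theorem bimodule_end_eq_smul [Algebra.IsCentral k A] (φ : Module.End (A ⊗[k] Aᵐᵒᵖ) A) :
    ∃ c : k, ∀ x, φ x = c • x := by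
  have hleft (x : A) : φ x = x * φ 1 := by
    simpa [bimodule_smul_def] using φ.map_smul (x ⊗ₜ 1) 1
  have hright (x : A) : φ x = φ 1 * x := by
    simpa [bimodule_smul_def] using φ.map_smul (1 ⊗ₜ .op x) 1
  obtain ⟨c, hc⟩ := Algebra.mem_bot.1 <| Algebra.IsCentral.out (K := k) <|
    Subalgebra.mem_center_iff.2 fun x => (hleft x).symm.trans (hright x)
  exact ⟨c, fun x => by rw [hright, ← hc, Algebra.smul_def]⟩

theorem exists_mulLeftRight_eqOn [Algebra.IsCentral k A] [IsSimpleRing A] (f : Module.End k A)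
    (s : Finset A) : ∃ r, Set.EqOn f (AlgHom.mulLeftRight k A r) s := by
  have := isSimpleModule_bimodule (k := k) (A := A)
  let g : Module.End (Module.End (A ⊗[k] Aᵐᵒᵖ) A) A := { f with
    map_smul' φ x := by
      obtain ⟨c, hc⟩ := bimodule_end_eq_smul φ
      simp [hc] }
  exact jacobson_density g s

theorem baseChange_mulLeftRight_mem (J : Ideal (K ⊗[k] A)) [J.IsTwoSided] (r : A ⊗[k] Aᵐᵒᵖ)
    {z : K ⊗[k] A} (hz : z ∈ J) : (AlgHom.mulLeftRight k A r).baseChange K z ∈ J := by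
  induction r with
  | zero => simp
  | add r s hr hs => simpa using add_mem hr hs
  | tmul a b =>
    have h : (AlgHom.mulLeftRight k A (a ⊗ₜ b)).baseChange K =
        LinearMap.mulLeftRight K (1 ⊗ₜ a, 1 ⊗ₜ b.unop) := by
      ext
      simp
    simpa [h] using! J.mul_mem_right _ (J.mul_mem_left _ hz)

theorem baseChange_mem_of_isTwoSided [Algebra.IsCentral k A] [IsSimpleRing A]
    (J : Ideal (K ⊗[k] A)) [J.IsTwoSided] (f : Module.End k A) {z : K ⊗[k] A} (hz : z ∈ J) :
    f.baseChange K z ∈ J := by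
  classical
  obtain ⟨s, rfl⟩ := TensorProduct.exists_finset z
  -- On the finitely many right-hand factors of `z`, `f` is an action of `A ⊗ Aᵐᵒᵖ`, which
  -- preserves `J`.
  obtain ⟨r, hr⟩ := exists_mulLeftRight_eqOn f (s.image Prod.snd)
  convert baseChange_mulLeftRight_mem J r hz using 1
  simp only [map_sum, LinearMap.baseChange_tmul]
  exact Finset.sum_congr rfl fun i hi => by rw [hr (Finset.mem_image_of_mem _ hi)]

theorem baseChange_coord_smul_one {ι : Type*} [DecidableEq ι] (b : Module.Basis ι k A) (i : ι)
    (z : K ⊗[k] A) :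
    (Algebra.linearMap k A ∘ₗ b.coord i).baseChange K z =
      algebraMap K (K ⊗[k] A) (TensorProduct.equivFinsuppOfBasisRight b z i) := by
  induction z with
  | zero => simp
  | add x y hx hy => simp only [map_add, hx, hy, Finsupp.add_apply]
  | tmul c x =>
    simp [Algebra.algebraMap_eq_smul_one, Algebra.TensorProduct.one_def, TensorProduct.smul_tmul']

instance isSimpleRing_baseChange [Algebra.IsCentral k A] [IsSimpleRing A] :
    IsSimpleRing (K ⊗[k] A) := by
  classical
  refine isSimpleRing_iff_isTwoSided_imp.2
    ⟨inferInstance, fun J _ => or_iff_not_imp_left.2 fun hJ => ?_⟩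
  obtain ⟨z, hz, hz₀⟩ := J.ne_bot_iff.1 hJ
  let b := Module.Free.chooseBasis k A
  obtain ⟨i, hi⟩ : ∃ i, TensorProduct.equivFinsuppOfBasisRight b z i ≠ 0 := by
    by_contra! h
    exact hz₀ ((TensorProduct.equivFinsuppOfBasisRight b).map_eq_zero_iff.1 (Finsupp.ext h))
  refine J.eq_top_of_isUnit_mem
    (baseChange_mem_of_isTwoSided J (Algebra.linearMap k A ∘ₗ b.coord i) hz) ?_
  rw [baseChange_coord_smul_one]
  exact hi.isUnit.map (algebraMap K (K ⊗[k] A))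

end Simplicity

section Kronecker

theorem isSimpleRing_of_baseChange {k K R : Type*} [Field k] [Field K] [Algebra k K] [Ring R]
    [Algebra k R] [IsSimpleRing (K ⊗[k] R)] : IsSimpleRing R := by
  have : Nontrivial R := by
    by_contra hR
    rw [not_nontrivial_iff_subsingleton] at hR
    exact not_subsingleton (K ⊗[k] R) inferInstance
  refine isSimpleRing_iff_isTwoSided_imp.2 ⟨this, fun J _ => or_iff_not_imp_right.2 fun hJ => ?_⟩
  have : Nontrivial (R ⧸ J) := Ideal.Quotient.nontrivial_iff.2 hJ
  let f := Algebra.TensorProduct.map (AlgHom.id k K) (Ideal.Quotient.mkₐ k J)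
  refine (Submodule.eq_bot_iff J).2 fun x hx => ?_
  refine Algebra.TensorProduct.includeRight_injective (R := k) (A := K) (algebraMap k K).injective
    ((f.toRingHom.injective (?_ : f (1 ⊗ₜ x) = f 0)).trans (map_zero _).symm)
  simp [f, Ideal.Quotient.eq_zero_iff_mem.2 hx]

/-- The Kronecker product of a finite family of square matrices, as a multilinear map. -/
def piKronecker (K ι n : Type*) [CommSemiring K] [Fintype ι] :
    MultilinearMap K (fun _ : ι => Matrix n n K) (Matrix (ι → n) (ι → n) K) where
  toFun X := .of fun f g => ∏ i, X i (f i) (g i)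
  map_update_add' X i x y := by
    ext f g
    exact ((MultilinearMap.mkPiAlgebra K ι K).compLinearMap fun i =>
      Matrix.entryLinearMap K K (f i) (g i)).map_update_add X i x y
  map_update_smul' X i c x := by
    ext f g
    exact ((MultilinearMap.mkPiAlgebra K ι K).compLinearMap fun i =>
      Matrix.entryLinearMap K K (f i) (g i)).map_update_smul X i c x

variable {k K A ι n : Type*} [Field k] [Field K] [Algebra k K] [Ring A] [Algebra k A]
  [Fintype ι]

theorem piKronecker_apply (X : ι → Matrix n n K) (f g : ι → n) :
    piKronecker K ι n X f g = ∏ i, X i (f i) (g i) :=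
  rfl

theorem span_range_piKronecker [Finite n] :
    Submodule.span K (Set.range (piKronecker K ι n)) = ⊤ := by
  classical
  have := Fintype.ofFinite n
  refine eq_top_iff.2 fun X _ => ?_
  rw [Matrix.matrix_eq_sum_single X]
  refine sum_mem fun f _ => sum_mem fun g _ => ?_
  have h : Matrix.single f g (X f g) =
      X f g • piKronecker K ι n fun i => Matrix.single (f i) (g i) 1 := by
    ext f' g'
    simp only [Matrix.smul_apply, piKronecker_apply, Matrix.single_apply,
      Finset.prod_ite_zero, funext_iff]
    simp [forall_and]
  exact h ▸ Submodule.smul_mem _ _ (Submodule.subset_span ⟨_, rfl⟩)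

variable [DecidableEq ι] [Fintype n] [DecidableEq n]

/-- The representation of a tensor power of `A` by Kronecker products of a matrix representation of
`A`. -/
noncomputable def kroneckerAlgHom (φ : A →ₐ[k] Matrix n n K) :
    (⨂[k] (_ : ι), A) →ₐ[k] Matrix (ι → n) (ι → n) K :=
  PiTensorProduct.liftAlgHom
    (((piKronecker K ι n).restrictScalars k).compLinearMap fun _ => φ.toLinearMap)
    (by
      ext f g
      simp [piKronecker_apply, Matrix.one_apply, Finset.prod_ite_zero, funext_iff])
    (fun x y => by
      ext f g
      simp [piKronecker_apply, Matrix.mul_apply, Finset.prod_univ_sum, Finset.prod_mul_distrib])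

/-- The `K`-linear extension of `kroneckerAlgHom` for a splitting `e` of `A` over `K`. -/
noncomputable def baseChangeKronecker (e : K ⊗[k] A ≃ₐ[K] Matrix n n K) :
    K ⊗[k] (⨂[k] (_ : ι), A) →ₐ[K] Matrix (ι → n) (ι → n) K :=
  Algebra.TensorProduct.lift (Algebra.ofId K _)
    (kroneckerAlgHom ((e.toAlgHom.restrictScalars k).comp Algebra.TensorProduct.includeRight))
    fun x _ => Algebra.commutes x _

theorem baseChangeKronecker_tprod (e : K ⊗[k] A ≃ₐ[K] Matrix n n K) (x : ι → A) :
    baseChangeKronecker e (1 ⊗ₜ PiTensorProduct.tprod k x) =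
      piKronecker K ι n fun i => e (1 ⊗ₜ x i) := by
  simp [baseChangeKronecker, kroneckerAlgHom, PiTensorProduct.liftAlgHom]

theorem piKronecker_mem_range_baseChangeKronecker [FiniteDimensional k A]
    (e : K ⊗[k] A ≃ₐ[K] Matrix n n K) (X : ι → Matrix n n K) :
    piKronecker K ι n X ∈ (baseChangeKronecker (ι := ι) e).range := by
  let b := Algebra.TensorProduct.basis K (Module.finBasis k A)
  have hX : X = fun i => ∑ l, b.repr (e.symm (X i)) l • e (1 ⊗ₜ Module.finBasis k A l) := by
    ext1 i
    rw [← e.apply_symm_apply (X i)]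
    conv_lhs => rw [← b.sum_repr (e.symm (X i))]
    simp [b]
  rw [hX, MultilinearMap.map_sum]
  refine sum_mem fun r _ => ?_
  rw [MultilinearMap.map_smul_univ, ← baseChangeKronecker_tprod]
  exact Subalgebra.smul_mem _ (AlgHom.mem_range_self _ _) _

theorem surjective_baseChangeKronecker [FiniteDimensional k A] (e : K ⊗[k] A ≃ₐ[K] Matrix n n K) :
    Function.Surjective (baseChangeKronecker (ι := ι) e) := by
  rw [← AlgHom.range_eq_top, ← Algebra.toSubmodule_eq_top, eq_top_iff, ← span_range_piKronecker,
    Submodule.span_le]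
  rintro _ ⟨X, rfl⟩
  exact piKronecker_mem_range_baseChangeKronecker e X

theorem bijective_baseChangeKronecker [FiniteDimensional k A] (e : K ⊗[k] A ≃ₐ[K] Matrix n n K) :
    Function.Bijective (baseChangeKronecker (ι := ι) e) := by
  have hA : Module.finrank k A = Fintype.card n * Fintype.card n := by
    rw [← Module.finrank_baseChange (R := K), e.toLinearEquiv.finrank_eq, Module.finrank_matrix,
      Module.finrank_self, mul_one]
  have hrank : Module.finrank K (K ⊗[k] (⨂[k] (_ : ι), A)) =
      Module.finrank K (Matrix (ι → n) (ι → n) K) := by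
    rw [Module.finrank_baseChange, finrank_tensorPower, Module.finrank_matrix]
    simp [hA, mul_pow]
  have hsurj := surjective_baseChangeKronecker (ι := ι) e
  exact ⟨(LinearMap.injective_iff_surjective_of_finrank_eq_finrank
    (f := (baseChangeKronecker e).toLinearMap) hrank).2 hsurj, hsurj⟩

/-- A splitting of `A` over `K` induces a splitting of its tensor powers by Kronecker products. -/
noncomputable def kroneckerAlgEquiv [FiniteDimensional k A] (e : K ⊗[k] A ≃ₐ[K] Matrix n n K) :
    K ⊗[k] (⨂[k] (_ : ι), A) ≃ₐ[K] Matrix (ι → n) (ι → n) K :=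
  .ofBijective (baseChangeKronecker e) (bijective_baseChangeKronecker e)

end Kronecker

section SymmetricFunctions

variable {ι n β : Type*}

theorem comp_perm_eq_of_not_injective [Finite ι] {F : (ι → n) → β}
    (hF : ∀ g (σ τ : Equiv.Perm ι), F (g ∘ ⇑(σ * τ)) = F (g ∘ ⇑(τ * σ)))
    (hinj : ∀ g : ι → n, ¬ g.Injective) (σ : Equiv.Perm ι) (g : ι → n) : F (g ∘ σ) = F g := by
  classical
  -- All transpositions are conjugate, so `swap i j` may be replaced by one fixing `g`.
  induction σ using Equiv.Perm.swap_induction_on generalizing g with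
  | one => rfl
  | swap_mul σ i j hij ih =>
    rw [Equiv.Perm.coe_mul, ← Function.comp_assoc, ih]
    obtain ⟨a, b, hab, hne⟩ := Function.not_injective_iff.1 (hinj g)
    obtain ⟨α, hα⟩ := isConj_iff.1 (Equiv.Perm.isConj_swap hne hij)
    have hg : g ∘ Equiv.swap a b = g := by
      rw [Equiv.comp_swap_eq_update, hab, Function.update_eq_self, ← hab, Function.update_eq_self]
    rw [← hα, hF, inv_mul_cancel_left, hg]

variable [Fintype ι]

theorem exists_perm_of_map_univ_eq {f g : ι → n}
    (h : Finset.univ.val.map f = Finset.univ.val.map g) : ∃ σ : Equiv.Perm ι, g ∘ σ = f := by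
  classical
  have hcard (c : n) : Fintype.card {i // f i = c} = Fintype.card {i // g i = c} := by
    simpa [Multiset.count_map, Fintype.card_subtype, eq_comm, Finset.card_def] using
      congrArg (Multiset.count c) h
  exact ⟨.ofFiberEquiv fun c => Fintype.equivOfCardEq (hcard c),
    funext (Equiv.ofFiberEquiv_map _)⟩

/-- The multiset of entries of a tuple. -/
def tupleToSym (g : ι → n) : Sym n (Fintype.card ι) :=
  ⟨Finset.univ.val.map g, by simp⟩

theorem tupleToSym_surjective : Function.Surjective (tupleToSym : (ι → n) → _) := by
  classical
  rintro ⟨s, hs⟩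
  let e : ι ≃ s := Fintype.equivOfCardEq (by simp [hs])
  refine ⟨fun i => (e i).1, Subtype.ext ?_⟩
  calc Finset.univ.val.map (fun i => (e i).1)
      = (Finset.univ.val.map e).map fun x => x.1 := (Multiset.map_map _ _ _).symm
    _ = s := by rw [Multiset.map_univ_val_equiv, Multiset.map_univ_coe]

theorem tupleToSym_comp_perm (g : ι → n) (σ : Equiv.Perm ι) :
    tupleToSym (g ∘ σ) = tupleToSym g :=
  Subtype.ext <| by
    simp only [tupleToSym, ← Multiset.map_map, Multiset.map_univ_val_equiv]

theorem tupleToSym_eq_iff {f g : ι → n} :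
    tupleToSym f = tupleToSym g ↔ ∃ σ : Equiv.Perm ι, g ∘ σ = f :=
  ⟨fun h => exists_perm_of_map_univ_eq congr(($h).1), by
    rintro ⟨σ, rfl⟩
    exact tupleToSym_comp_perm g σ⟩

variable (ι n) in
/-- The matrices whose entries are symmetric functions of the tuple indexing the column. -/
def rightSymmetricMatrices (K : Type*) [Semiring K] : Submodule K (Matrix (ι → n) (ι → n) K) where
  carrier := {X | ∀ f g (σ : Equiv.Perm ι), X f (g ∘ σ) = X f g}
  add_mem' hX hY f g σ := by simp [hX f g σ, hY f g σ]
  zero_mem' _ _ _ := rfl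
  smul_mem' c X hX f g σ := by simp [hX f g σ]

/-- A symmetric function of tuples is a function of the underlying multisets. -/
noncomputable def rightSymmetricMatricesEquiv (K : Type*) [Semiring K] :
    rightSymmetricMatrices ι n K ≃ₗ[K] ((ι → n) → Sym n (Fintype.card ι) → K) where
  toFun X f s := X.1 f (Function.surjInv tupleToSym_surjective s)
  map_add' _ _ := rfl
  map_smul' _ _ := rfl
  invFun Y := ⟨.of fun f g => Y f (tupleToSym g), fun f g σ => by simp [tupleToSym_comp_perm]⟩
  left_inv X := by
    ext f g
    obtain ⟨σ, hσ⟩ := tupleToSym_eq_iff.1 (Function.surjInv_eq tupleToSym_surjective (tupleToSym g))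
    simp [← hσ, X.2 f g σ]
  right_inv Y := by
    ext f s
    simp [Function.surjInv_eq]

theorem finrank_rightSymmetricMatrices [Fintype n] (K : Type*) [Semiring K]
    [StrongRankCondition K] :
    Module.finrank K (rightSymmetricMatrices ι n K) = Fintype.card n ^ Fintype.card ι *
      (Fintype.card n + Fintype.card ι - 1).choose (Fintype.card ι) := by
  classical
  rw [(rightSymmetricMatricesEquiv K).finrank_eq]
  simp [Module.finrank_pi_fintype, Sym.card_sym_eq_choose]

end SymmetricFunctions

section Descent

section Coordinates

variable {k K R ι : Type*} [CommRing k] [CommRing K] [Algebra k K] [Ring R] [Algebra k R]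
  [DecidableEq ι]

theorem equivFinsuppOfBasisLeft_one_tmul_mul (b : Module.Basis ι k K)
    (x : R) (z : K ⊗[k] R) (i : ι) :
    TensorProduct.equivFinsuppOfBasisLeft b ((1 ⊗ₜ x) * z) i =
      x * TensorProduct.equivFinsuppOfBasisLeft b z i := by
  induction z with
  | zero => simp
  | tmul c y => simp
  | add y z hy hz => simp only [mul_add, map_add, Finsupp.add_apply, hy, hz]

theorem equivFinsuppOfBasisLeft_mul_one_tmul (b : Module.Basis ι k K)
    (x : R) (z : K ⊗[k] R) (i : ι) :
    TensorProduct.equivFinsuppOfBasisLeft b (z * (1 ⊗ₜ x)) i =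
      TensorProduct.equivFinsuppOfBasisLeft b z i * x := by
  induction z with
  | zero => simp
  | tmul c y => simp
  | add y z hy hz => simp only [add_mul, map_add, Finsupp.add_apply, hy, hz]

end Coordinates

variable {k K R S : Type*} [Field k] [Field K] [Algebra k K] [Ring R] [Algebra k R] [Ring S]
  [Algebra K S]

theorem mem_center_of_commute_one_tmul (e : K ⊗[k] R ≃ₐ[K] S) {z : S}
    (hz : ∀ r, Commute z (e (1 ⊗ₜ r))) : z ∈ Subalgebra.center K S := by
  suffices h : ∀ y, e y * z = z * e y from
    Subalgebra.mem_center_iff.2 fun y => by simpa using h (e.symm y)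
  intro y
  induction y with
  | zero => simp
  | add x y hx hy => rw [map_add, add_mul, mul_add, hx, hy]
  | tmul c r =>
    have hc : c ⊗ₜ[k] r = c • (1 ⊗ₜ r) := by simp [TensorProduct.smul_tmul']
    rw [hc, map_smul, smul_mul_assoc, mul_smul_comm, (hz r).eq]

theorem exists_eq_smul_of_semiconjBy [Algebra.IsCentral K S] [Nontrivial S]
    (e : K ⊗[k] R ≃ₐ[K] S) {P : S} (hP : IsUnit P) {α : R → R}
    (hα : ∀ r, SemiconjBy P (e (1 ⊗ₜ r)) (e (1 ⊗ₜ α r))) :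
    ∃ (u : R) (c : K), c ≠ 0 ∧ e (1 ⊗ₜ u) = c • P := by
  classical
  obtain ⟨P, rfl⟩ := hP
  -- Every coordinate of `P` over a basis of `K` satisfies the same intertwining relation as `P`.
  let coord := TensorProduct.equivFinsuppOfBasisLeft (N := R) (Module.Free.chooseBasis k K)
  obtain ⟨i, hi⟩ : ∃ i, coord (e.symm P) i ≠ 0 := by
    by_contra! h
    exact P.ne_zero (e.symm.map_eq_zero_iff.1 (coord.map_eq_zero_iff.1 (Finsupp.ext h)))
  let u := coord (e.symm P) i
  have hu (r : R) : SemiconjBy (e (1 ⊗ₜ u)) (e (1 ⊗ₜ r)) (e (1 ⊗ₜ α r)) := by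
    have h : e.symm P * 1 ⊗ₜ r = 1 ⊗ₜ α r * e.symm P := by
      simpa using congrArg e.symm (hα r).eq
    have hcoord : u * r = α r * u := by
      rw [← equivFinsuppOfBasisLeft_mul_one_tmul, h, equivFinsuppOfBasisLeft_one_tmul_mul]
    simp [SemiconjBy, ← map_mul, hcoord]
  obtain ⟨c, hc⟩ := Algebra.mem_bot.1 <| Algebra.IsCentral.out (K := K) <|
    mem_center_of_commute_one_tmul e fun r => (hα r).units_inv_symm_left.mul_left (hu r)
  have huP : e (1 ⊗ₜ u) = c • (P : S) := by
    rw [Algebra.smul_def, Algebra.commutes, hc, P.mul_inv_cancel_left]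
  refine ⟨u, c, ?_, huP⟩
  rintro rfl
  refine hi (Algebra.TensorProduct.includeRight_injective (R := k) (A := K)
    (algebraMap k K).injective (e.injective ?_))
  simpa using huP

end Descent

section FactorPermutations

variable {k K A ι n : Type*} [Field k] [Field K] [Algebra k K] [Ring A] [Algebra k A]
  [DecidableEq n] [Fintype ι]

variable (K n)

/-- The matrix of the permutation `σ` of the factors of the tensor power `⨂ (_ : ι), (n → K)`, in
the convention where multiplying by it on the right precomposes column indices with `σ`. -/
def factorPermMatrix (σ : Equiv.Perm ι) : Matrix (ι → n) (ι → n) K :=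
  .of fun f g => if f = g ∘ σ then 1 else 0

variable {K n} [DecidableEq ι] [Fintype n]

theorem mul_factorPermMatrix_apply (X : Matrix (ι → n) (ι → n) K) (σ : Equiv.Perm ι)
    (f g : ι → n) : (X * factorPermMatrix K n σ) f g = X f (g ∘ σ) := by
  simp [Matrix.mul_apply, factorPermMatrix]

theorem factorPermMatrix_mul_apply (X : Matrix (ι → n) (ι → n) K) (σ : Equiv.Perm ι)
    (f g : ι → n) : (factorPermMatrix K n σ * X) f g = X (f ∘ σ.symm) g := by
  have h (j : ι → n) : f = j ∘ σ ↔ j = f ∘ σ.symm := by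
    rw [eq_comm, ← Equiv.eq_comp_symm]
  simp [Matrix.mul_apply, factorPermMatrix, h]

theorem isUnit_factorPermMatrix (σ : Equiv.Perm ι) : IsUnit (factorPermMatrix K n σ) := by
  refine IsUnit.of_mul_eq_one (factorPermMatrix K n σ.symm) ?_
  ext f g
  rw [mul_factorPermMatrix_apply]
  simp [factorPermMatrix, Matrix.one_apply, Function.comp_assoc]

theorem semiconjBy_factorPermMatrix_piKronecker (σ : Equiv.Perm ι) (X : ι → Matrix n n K) :
    SemiconjBy (factorPermMatrix K n σ) (piKronecker K ι n X)
      (piKronecker K ι n fun i => X (σ i)) := by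
  ext f g
  rw [factorPermMatrix_mul_apply, mul_factorPermMatrix_apply, piKronecker_apply, piKronecker_apply]
  simpa using (Equiv.prod_comp σ fun i => X i (f (σ.symm i)) (g i)).symm

theorem semiconjBy_factorPermMatrix_baseChangeKronecker (e : K ⊗[k] A ≃ₐ[K] Matrix n n K)
    (σ : Equiv.Perm ι) (r : ⨂[k] (_ : ι), A) :
    SemiconjBy (factorPermMatrix K n σ) (baseChangeKronecker e (1 ⊗ₜ r))
      (baseChangeKronecker e (1 ⊗ₜ PiTensorProduct.reindex k (fun _ => A) σ.symm r)) := by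
  induction r using PiTensorProduct.induction_on with
  | smul_tprod c x =>
    have h := semiconjBy_factorPermMatrix_piKronecker σ fun i => e (1 ⊗ₜ x i)
    have hsmul (z : K ⊗[k] (⨂[k] (_ : ι), A)) :
        baseChangeKronecker e (c • z) = algebraMap k K c • baseChangeKronecker e z := by
      rw [← algebraMap_smul K c z, map_smul]
    simpa only [map_smul, TensorProduct.tmul_smul, PiTensorProduct.reindex_tprod, Equiv.symm_symm,
      hsmul, baseChangeKronecker_tprod] using h.smul_right (algebraMap k K c)
  | add x y hx hy => simpa only [map_add, TensorProduct.tmul_add] using hx.add_right hy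

theorem exists_kroneckerAlgEquiv_eq_smul_factorPermMatrix [FiniteDimensional k A] [Nonempty n]
    (e : K ⊗[k] A ≃ₐ[K] Matrix n n K) (σ : Equiv.Perm ι) :
    ∃ (u : ⨂[k] (_ : ι), A) (c : K), c ≠ 0 ∧
      kroneckerAlgEquiv e (1 ⊗ₜ u) = c • factorPermMatrix K n σ :=
  exists_eq_smul_of_semiconjBy (kroneckerAlgEquiv e) (isUnit_factorPermMatrix σ)
    (α := PiTensorProduct.reindex k (fun _ => A) σ.symm)
    (semiconjBy_factorPermMatrix_baseChangeKronecker e σ)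

end FactorPermutations

section LeftAnnihilator

/-- The left ideal of all `x` with `x * w t = 0` for every `t`. -/
def leftAnnihilator {R τ : Type*} [Semiring R] (w : τ → R) : Ideal R where
  carrier := {x | ∀ t, x * w t = 0}
  add_mem' hx hy t := by rw [add_mul, hx t, hy t, add_zero]
  zero_mem' t := zero_mul _
  smul_mem' r x hx t := by rw [smul_eq_mul, mul_assoc, hx t, mul_zero]

theorem mem_leftAnnihilator {R τ : Type*} [Semiring R] {w : τ → R} {x : R} :
    x ∈ leftAnnihilator w ↔ ∀ t, x * w t = 0 :=
  Iff.rfl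

variable {k K R S τ : Type*} [Field k] [Field K] [Algebra k K] [Ring R] [Algebra k R] [Ring S]
  [Algebra K S]

theorem mem_range_baseChange_leftAnnihilator_iff (w : τ → R) (x : K ⊗[k] R) :
    x ∈ (((leftAnnihilator w).restrictScalars k).subtype.baseChange K).range ↔
      ∀ t, x * (1 ⊗ₜ w t) = 0 := by
  classical
  refine ⟨?_, fun hx => ?_⟩
  · rintro ⟨y, rfl⟩ t
    induction y with
    | zero => simp
    | add x y hx hy => rw [map_add, add_mul, hx, hy, add_zero]
    | tmul c x => simp [mem_leftAnnihilator.1 x.2 t]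
  · let b := Module.Free.chooseBasis k K
    have hmem (i) : TensorProduct.equivFinsuppOfBasisLeft b x i ∈ leftAnnihilator w := fun t => by
      rw [← equivFinsuppOfBasisLeft_mul_one_tmul, hx t, map_zero, Finsupp.zero_apply]
    rw [← (TensorProduct.equivFinsuppOfBasisLeft b).symm_apply_apply x,
      TensorProduct.equivFinsuppOfBasisLeft_symm_apply, Finsupp.sum]
    exact sum_mem fun i _ => ⟨b i ⊗ₜ ⟨_, hmem i⟩, rfl⟩

theorem finrank_leftAnnihilator_baseChange (e : K ⊗[k] R ≃ₐ[K] S) (w : τ → R) :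
    Module.finrank K (leftAnnihilator fun t => e (1 ⊗ₜ w t)) =
      Module.finrank k (leftAnnihilator w) := by
  let f := ((leftAnnihilator w).restrictScalars k).subtype.baseChange K
  have hf : Function.Injective f :=
    Module.Flat.lTensor_preserves_injective_linearMap _ Subtype.val_injective
  have hrange : (leftAnnihilator fun t => e (1 ⊗ₜ w t)).restrictScalars K =
      f.range.map (e.toLinearEquiv : K ⊗[k] R →ₗ[K] S) := by
    ext x
    rw [Submodule.mem_map_equiv, mem_range_baseChange_leftAnnihilator_iff]
    refine forall_congr' fun t => ?_
    rw [← e.symm.map_eq_zero_iff]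
    simp
  calc Module.finrank K ((leftAnnihilator fun t => e (1 ⊗ₜ w t)).restrictScalars K)
      = Module.finrank K f.range := by rw [hrange, LinearEquiv.finrank_map_eq]
    _ = Module.finrank k (leftAnnihilator w) :=
      (LinearMap.finrank_range_of_inj hf).trans Module.finrank_baseChange

end LeftAnnihilator

section SymmetricPower

variable {k K A ι n : Type*} [Field k] [Field K] [Algebra k K] [Ring A] [Algebra k A]
  [Fintype ι] [Fintype n] [DecidableEq n]

theorem leftAnnihilator_factorPermMatrix_commutators [DecidableEq ι]
    (h : Fintype.card n < Fintype.card ι) {a : Equiv.Perm ι → Matrix (ι → n) (ι → n) K}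
    {c : Equiv.Perm ι → K} (hc : ∀ σ, c σ ≠ 0) (ha : ∀ σ, a σ = c σ • factorPermMatrix K n σ) :
    (leftAnnihilator fun s : Equiv.Perm ι × Equiv.Perm ι =>
      a s.1 * a s.2 - a s.2 * a s.1).restrictScalars K = rightSymmetricMatrices ι n K := by
  ext X
  have hX : (∀ s : Equiv.Perm ι × Equiv.Perm ι, X * (a s.1 * a s.2 - a s.2 * a s.1) = 0) ↔
      ∀ (σ τ : Equiv.Perm ι) f g, X f (g ∘ ⇑(τ * σ)) = X f (g ∘ ⇑(σ * τ)) := by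
    rw [Prod.forall]
    refine forall₂_congr fun σ τ => ?_
    have hne := mul_ne_zero (hc σ) (hc τ)
    simp [ha, mul_comm (c τ), smul_smul, ← smul_sub, hne, mul_sub, sub_eq_zero, ← Matrix.ext_iff,
      ← mul_assoc, mul_factorPermMatrix_apply, Function.comp_assoc]
  refine hX.trans ⟨fun hX f g σ => ?_, fun hX σ τ f g => by rw [hX f g, hX f g]⟩
  exact comp_perm_eq_of_not_injective (fun g σ τ => hX τ σ f g)
    (fun g hg => h.not_ge (Fintype.card_le_of_injective g hg)) σ g

theorem hasRep_tensorPower [FiniteDimensional k A] [Nonempty n]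
    (e : K ⊗[k] A ≃ₐ[K] Matrix n n K) (h : Fintype.card n < Fintype.card ι) :
    HasRep k (⨂[k] (_ : ι), A) (Fintype.card n ^ Fintype.card ι *
      (Fintype.card n + Fintype.card ι - 1).choose (Fintype.card ι)) := by
  classical
  choose u c hc hu using exists_kroneckerAlgEquiv_eq_smul_factorPermMatrix (ι := ι) e
  let Ψ := kroneckerAlgEquiv (ι := ι) e
  let w (s : Equiv.Perm ι × Equiv.Perm ι) := u s.1 * u s.2 - u s.2 * u s.1
  have hw (s) : Ψ (1 ⊗ₜ w s) =
      Ψ (1 ⊗ₜ u s.1) * Ψ (1 ⊗ₜ u s.2) - Ψ (1 ⊗ₜ u s.2) * Ψ (1 ⊗ₜ u s.1) := by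
    simp [w, TensorProduct.tmul_sub, ← map_mul]
  have hrank : Module.finrank k (leftAnnihilator w) =
      Module.finrank K (rightSymmetricMatrices ι n K) := by
    rw [← finrank_leftAnnihilator_baseChange Ψ, funext hw,
      ← leftAnnihilator_factorPermMatrix_commutators h hc hu]
    rfl
  rw [← finrank_rightSymmetricMatrices K, ← hrank]
  exact .of_ideal _

end SymmetricPower

section Binomial

theorem choose_add_pow_mul_modEq_one {p : ℕ} [Fact p.Prime] {s c : ℕ} (hc : c < p ^ s) (m : ℕ) :
    (c + p ^ s * m).choose (p ^ s * m) ≡ 1 [MOD p] := by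
  have hp : 0 < p := (Fact.out : p.Prime).pos
  induction s generalizing c with
  | zero =>
    obtain rfl : c = 0 := by simpa using hc
    simp [Nat.ModEq.refl]
  | succ s ih =>
    have h := Choose.choose_modEq_choose_mod_mul_choose_div_nat
      (n := c + p ^ (s + 1) * m) (k := p ^ (s + 1) * m) (p := p)
    rw [pow_succ', mul_assoc, Nat.add_mul_mod_self_left, Nat.mul_mod_right, Nat.choose_zero_right,
      one_mul, Nat.add_mul_div_left _ _ hp, Nat.mul_div_cancel_left _ hp] at h
    rw [pow_succ', mul_assoc]
    exact h.trans (ih (Nat.div_lt_of_lt_mul (by rwa [← pow_succ'])))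

theorem not_dvd_choose_add_sub_one {p d m s : ℕ} (hp : p.Prime) (hd : d ≠ 0) (hds : d ≤ p ^ s)
    (hm : p ^ s ∣ m) : ¬ p ∣ (d + m - 1).choose m := by
  have : Fact p.Prime := ⟨hp⟩
  obtain ⟨m, rfl⟩ := hm
  have h := choose_add_pow_mul_modEq_one (p := p) (s := s) (c := d - 1) (by omega) m
  rw [show d + p ^ s * m - 1 = d - 1 + p ^ s * m by omega, h.dvd_iff dvd_rfl]
  exact hp.not_dvd_one

theorem coprime_choose_degree_pow {d : ℕ} (hd : d ≠ 0) :
    d.Coprime ((d + d ^ d - 1).choose (d ^ d)) :=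
  Nat.coprime_of_dvd fun _ hp hpd =>
    not_dvd_choose_add_sub_one hp hd (Nat.lt_pow_self hp.one_lt).le (pow_dvd_pow_of_dvd hpd d)

theorem exists_one_add_mul_eq_pow {q n : ℕ} (h : q.Coprime n) (hq : 0 < q) (d : ℕ) :
    ∃ c, 1 + c * n = q ^ (n.totient * d) := by
  have hmod : 1 ≡ q ^ (n.totient * d) [MOD n] := by
    simpa [pow_mul] using ((Nat.ModEq.pow_totient h).pow d).symm
  have hpos : 1 ≤ q ^ (n.totient * d) := Nat.one_le_pow _ _ hq
  obtain ⟨c, hc⟩ := (Nat.modEq_iff_dvd' hpos).1 hmod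
  exact ⟨c, by rw [mul_comm, ← hc]; omega⟩

end Binomial

section Period

variable {k A : Type*} [Field k] [Ring A] [Algebra k A] [FiniteDimensional k A]
  [Algebra.IsCentral k A] [IsSimpleRing A]

variable (k A) in
theorem exists_baseChange_algEquiv_matrix : ∃ (d : ℕ) (_ : NeZero d),
    Nonempty (AlgebraicClosure k ⊗[k] A ≃ₐ[AlgebraicClosure k]
      Matrix (Fin d) (Fin d) (AlgebraicClosure k)) :=
  IsSimpleRing.exists_algEquiv_matrix_of_isAlgClosed _ _

theorem isSimpleRing_tensorPower {ι : Type*} [Finite ι] : IsSimpleRing (⨂[k] (_ : ι), A) := by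
  classical
  have := Fintype.ofFinite ι
  obtain ⟨d, _, ⟨e⟩⟩ := exists_baseChange_algEquiv_matrix k A
  have : IsSimpleRing (AlgebraicClosure k ⊗[k] (⨂[k] (_ : ι), A)) :=
    .of_ringEquiv (kroneckerAlgEquiv e).symm.toRingEquiv inferInstance
  exact isSimpleRing_of_baseChange (k := k) (K := AlgebraicClosure k)

variable {d a c n m : ℕ} [NeZero d]

theorem hasRep_tensorPower_choose (hd : Module.finrank k A = d ^ 2) (hm : d < m) :
    HasRep k (⨂[k] (_ : Fin m), A) (d ^ m * (d + m - 1).choose m) := by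
  obtain ⟨t, ht, ⟨e⟩⟩ := exists_baseChange_algEquiv_matrix k A
  obtain ⟨e⟩ := IsSplit.nonempty_algEquiv_matrix ⟨t, NeZero.pos t, ⟨e⟩⟩
    (Module.finrank_baseChange.trans hd)
  simpa using hasRep_tensorPower (ι := Fin m) e (by simpa using hm)

theorem hasRep_tensorPower_of_isSplit (hd : Module.finrank k A = d ^ 2)
    (hn : IsSplit k (⨂[k] (_ : Fin n), A)) (hm : a + c * n = m) (hdm : d < m) :
    HasRep k (⨂[k] (_ : Fin a), A) (d ^ a * (d + m - 1).choose m) :=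
  (hasRep_tensorPower_choose hd hdm).descend_tensorPower_mul hd hn hm

theorem isSplit_tensorPower_degree_pow_mod (hd : Module.finrank k A = d ^ 2) (hd₁ : 1 < d)
    (hn : IsSplit k (⨂[k] (_ : Fin n), A)) : IsSplit k (⨂[k] (_ : Fin (d ^ d % n)), A) := by
  have := isSimpleRing_tensorPower (k := k) (A := A) (ι := Fin (d ^ d % n))
  refine isSplit_of_coprime_rep (δ := d ^ (d ^ d % n)) ?_
    (hasRep_tensorPower_of_isSplit hd hn (Nat.mod_add_div' _ _) (Nat.lt_pow_self hd₁))
    ((coprime_choose_degree_pow (NeZero.ne d)).pow_left _)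
  rw [finrank_tensorPower, hd, Fintype.card_fin, pow_right_comm]

theorem dvd_of_dvd_degree_of_isSplit {D : Type*} [DivisionRing D] [Algebra k D]
    [FiniteDimensional k D] [Algebra.IsCentral k D] (hd : Module.finrank k D = d ^ 2)
    (hn : IsSplit k (⨂[k] (_ : Fin n), D)) {q : ℕ} (hq : q.Prime) (hqd : q ∣ d) : q ∣ n := by
  by_contra hqn
  let m := q ^ (n.totient * d)
  have hdm : d < m := calc
    d ≤ n.totient * d := Nat.le_mul_of_pos_left d <|
      Nat.totient_pos.2 <| Nat.pos_of_ne_zero fun h => hqn (h ▸ dvd_zero q)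
    _ < m := Nat.lt_pow_self hq.one_lt
  obtain ⟨c, hc⟩ := exists_one_add_mul_eq_pow (hq.coprime_iff_not_dvd.2 hqn) hq.pos d
  have hdvd := ((hasRep_tensorPower_of_isSplit hd hn hc hdm).comp
    (PiTensorProduct.singleAlgHom (R := k) (A := fun _ : Fin 1 => D) 0)).finrank_dvd
  rw [hd, pow_one, sq, Nat.mul_dvd_mul_iff_left (NeZero.pos d)] at hdvd
  exact not_dvd_choose_add_sub_one hq (NeZero.ne d) hdm.le dvd_rfl (hqd.trans hdvd)

end Period

/-- If `D` is a central division algebra over `k` of degree `d > 1`, and `n` is the least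
positive integer such that `D^{⊗ n}` is isomorphic as a `k`-algebra to a matrix algebra
`M_t(k)` for some positive integer `t` (i.e. `n` is the period of `D`), then a prime `q`
divides `n` if and only if it divides `d`. -/
theorem period_prime_dvd_iff_degree_prime_dvd
    {k : Type*} [Field k]
    (D : Type*) [DivisionRing D] [Algebra k D] [FiniteDimensional k D]
    (hD : Subalgebra.center k D = ⊥) (d : ℕ) (hd : d ^ 2 = Module.finrank k D)
    (hd1 : 1 < d) (n : ℕ) (hn : 0 < n)
    (hsplit : ∃ t : ℕ, 0 < t ∧
      Nonempty ((⨂[k] (_ : Fin n), D) ≃ₐ[k] Matrix (Fin t) (Fin t) k))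
    (hmin : ∀ n' : ℕ, 0 < n' →
      (∃ t : ℕ, 0 < t ∧
        Nonempty ((⨂[k] (_ : Fin n'), D) ≃ₐ[k] Matrix (Fin t) (Fin t) k)) → n ≤ n') :
    ∀ q : ℕ, q.Prime → (q ∣ n ↔ q ∣ d) := by
  have : NeZero d := ⟨by lia⟩
  have : Algebra.IsCentral k D := ⟨hD.le⟩
  refine fun q hq => ⟨fun hqn => ?_, dvd_of_dvd_degree_of_isSplit hd.symm hsplit hq⟩
  have hmod : d ^ d % n = 0 := by
    by_contra hr
    exact (hmin _ (Nat.pos_of_ne_zero hr)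
      (isSplit_tensorPower_degree_pow_mod hd.symm hd1 hsplit)).not_gt (Nat.mod_lt _ hn)
  exact hq.dvd_of_dvd_pow (hqn.trans (Nat.dvd_of_mod_eq_zero hmod))
end
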